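/- Let G1 be a finite simple graph with maximum degree at most 3, let u and v be adjacent vertices of G1 both of degree 3, and suppose lir(^2G1) ≤ 2. Fix an integer ℓ ≥ 5 and let G2 be the graph obtained from G1 by deleting the edge uv and adding ℓ − 1 new vertices x_1, …, x_{ℓ−1} together with the edges u x_1, x_1 x_2, …, x_{ℓ−2} x_{ℓ−1}, x_{ℓ−1} v (i.e., replacing the edge uv by a path of length ℓ). Then lir(^2G2) ≤ 2. -/

import Mathlib

open scoped Classical

/-- The red degree of a vertex `x`: the sum of the red multiplicities `r e`
over all edges `e` of `G` incident with `x`. -/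
noncomputable def redDeg {V : Type*} [Fintype V] [DecidableEq V]
    (G : SimpleGraph V) (r : Sym2 V → ℕ) (x : V) : ℕ :=
  ∑ e ∈ G.edgeFinset.filter (fun e => x ∈ e), r e

/-- The blue degree of a vertex `x`: the sum of `2 - r e` over all edges `e`
of `G` incident with `x`. -/
noncomputable def blueDeg {V : Type*} [Fintype V] [DecidableEq V]
    (G : SimpleGraph V) (r : Sym2 V → ℕ) (x : V) : ℕ :=
  ∑ e ∈ G.edgeFinset.filter (fun e => x ∈ e), (2 - r e)

/-- `r : E(G) → {0,1,2}` encodes a locally irregular 2-edge-coloring of `²G`: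
every edge gets a red multiplicity at most 2, and for every edge `uv`, if
`r s(u,v) ≥ 1` the red degrees of `u` and `v` differ, and if `r s(u,v) ≤ 1`
the blue degrees of `u` and `v` differ. -/
def IsLIR2 {V : Type*} [Fintype V] [DecidableEq V]
    (G : SimpleGraph V) (r : Sym2 V → ℕ) : Prop :=
  (∀ e ∈ G.edgeSet, r e ≤ 2) ∧
  ∀ u v : V, G.Adj u v →
    (1 ≤ r s(u, v) → redDeg G r u ≠ redDeg G r v) ∧
    (r s(u, v) ≤ 1 → blueDeg G r u ≠ blueDeg G r v)

/-- `lir(²G) ≤ 2`: there is a locally irregular 2-edge-coloring of `²G`. -/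
def LIRtwoLE2 {V : Type*} [Fintype V] [DecidableEq V] (G : SimpleGraph V) : Prop :=
  ∃ r : Sym2 V → ℕ, IsLIR2 G r



theorem redDeg_eq_sum {V : Type*} [Fintype V] [DecidableEq V]
    (G : SimpleGraph V) (r : Sym2 V → ℕ) (x : V) :
    redDeg G r x = ∑ y, if G.Adj x y then r s(x, y) else 0 := by
  unfold redDeg
  rw [← Finset.sum_filter]
  symm
  apply Finset.sum_bij (fun y _ => s(x, y))
  · intro y hy
    simpa using hy
  · intro y _ z _ h
    exact Sym2.congr_right.1 h
  · intro e he
    induction e using Sym2.ind with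
    | _ p q =>
      simp only [Finset.mem_filter, SimpleGraph.mem_edgeFinset, SimpleGraph.mem_edgeSet,
        Sym2.mem_iff] at he
      obtain ⟨h, rfl | rfl⟩ := he
      · exact ⟨q, by simpa using h, rfl⟩
      · exact ⟨p, by simpa using h.symm, Sym2.eq_swap⟩
  · intro y _
    rfl

theorem red_add_blue {V : Type*} [Fintype V] [DecidableEq V]
    (G : SimpleGraph V) (r : Sym2 V → ℕ) (hr : ∀ e ∈ G.edgeSet, r e ≤ 2) (x : V) :
    redDeg G r x + blueDeg G r x = 2 * G.degree x := by
  have h : blueDeg G r x = redDeg G (fun e => 2 - r e) x := rfl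
  rw [h, redDeg_eq_sum, redDeg_eq_sum, ← Finset.sum_add_distrib]
  have : ∀ y, ((if G.Adj x y then r s(x, y) else 0) + (if G.Adj x y then 2 - r s(x, y) else 0))
      = if G.Adj x y then 2 else 0 := by
    intro y
    split_ifs with h
    · have := hr s(x, y) h
      omega
    · rfl
  rw [Finset.sum_congr rfl (fun y _ => this y), ← Finset.sum_filter, Finset.sum_const,
    ← SimpleGraph.card_neighborFinset_eq_degree, SimpleGraph.neighborFinset_eq_filter]
  simp [mul_comm]

theorem exists_third (c q : ℕ) : ∃ x, x ≤ 2 ∧ x ≠ c ∧ x ≠ q := by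
  by_contra! h
  have h0 := h 0
  have h1 := h 1
  have h2 := h 2
  omega

theorem exists_seq (n : ℕ) : ∀ c p q d : ℕ, c ≤ 2 → p ≤ 2 → q ≤ 2 → d ≤ 2 → p ≠ q →
    ∃ a : ℕ → ℕ, a 0 = c ∧ a 1 = p ∧ a (n + 3) = q ∧ a (n + 4) = d ∧ (∀ i, a i ≤ 2) ∧
      ∀ i, i < n + 3 → a i ≠ a (i + 2) := by
  induction n with
  | zero =>
    intro c p q d hc hp hq hd hpq
    obtain ⟨x, hx, hxc, hxd⟩ := exists_third c d
    refine ⟨fun i => if i = 0 then c else if i = 1 then p else if i = 2 then x else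
      if i = 3 then q else d, by simp, by simp, by simp, by simp, ?_, ?_⟩
    · intro i
      dsimp only
      split_ifs <;> assumption
    · intro i hi
      have : i = 0 ∨ i = 1 ∨ i = 2 := by omega
      rcases this with rfl | rfl | rfl <;> simp <;> omega
  | succ n ih =>
    intro c p q d hc hp hq hd hpq
    obtain ⟨x, hx, hxc, hxq⟩ := exists_third c q
    obtain ⟨a, h0, h1, h2, h3, h4, h5⟩ := ih p x q d hp hx hq hd hxq
    refine ⟨fun i => Nat.casesOn i c a, rfl, h0, ?_, ?_, ?_, ?_⟩
    · exact h2
    · exact h3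
    · rintro (_ | i)
      · exact hc
      · exact h4 i
    · rintro (_ | i) hi
      · change c ≠ a 1
        omega
      · exact h5 i (by omega)

theorem exists_ends (c R R' : ℕ) (hc : c ≤ 2) (h : R ≠ R') :
    ∃ p q, p ≤ 2 ∧ q ≤ 2 ∧ p ≠ q ∧
      (1 ≤ c → R ≠ c + p) ∧ (c ≤ 1 → R ≠ c + p + 2) ∧
      (1 ≤ c → R' ≠ c + q) ∧ (c ≤ 1 → R' ≠ c + q + 2) := by
  by_contra! H
  have h01 := H 0 1
  have h02 := H 0 2
  have h10 := H 1 0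
  have h12 := H 1 2
  have h20 := H 2 0
  have h21 := H 2 1
  interval_cases c <;> simp at * <;> omega

/-- the path-replaced graph -/
def pathGr {V : Type*} (G₁ : SimpleGraph V) (u v : V) (ℓ : ℕ) (hℓ : 5 ≤ ℓ) :
    SimpleGraph (V ⊕ Fin (ℓ - 1)) :=
  SimpleGraph.fromEdgeSet
      ((Sym2.map (Sum.inl : V → V ⊕ Fin (ℓ - 1)) '' (G₁.edgeSet \ {s(u, v)}))
        ∪ {s(Sum.inl u, (Sum.inr ⟨0, by omega⟩ : V ⊕ Fin (ℓ - 1)))}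
        ∪ {e : Sym2 (V ⊕ Fin (ℓ - 1)) | ∃ i : ℕ, ∃ h : i + 1 < ℓ - 1,
            e = s(Sum.inr ⟨i, by omega⟩, Sum.inr ⟨i + 1, h⟩)}
        ∪ {s((Sum.inr ⟨ℓ - 2, by omega⟩ : V ⊕ Fin (ℓ - 1)), Sum.inl v)})

section
variable {V : Type*} (G₁ : SimpleGraph V) (u v : V) (ℓ : ℕ) (hℓ : 5 ≤ ℓ)

theorem adj_ll (x y : V) : (pathGr G₁ u v ℓ hℓ).Adj (Sum.inl x) (Sum.inl y) ↔
    G₁.Adj x y ∧ s(x, y) ≠ s(u, v) := by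
  have key : s((Sum.inl x : V ⊕ Fin (ℓ - 1)), Sum.inl y) = Sym2.map Sum.inl s(x, y) := rfl
  have inj : Function.Injective (Sym2.map (Sum.inl : V → V ⊕ Fin (ℓ - 1))) :=
    Sym2.map.injective Sum.inl_injective
  unfold pathGr
  rw [SimpleGraph.fromEdgeSet_adj]
  constructor
  · rintro ⟨((h | h) | h) | h, hne⟩
    · rw [key, inj.mem_set_image] at h
      exact h
    · simp at h
    · obtain ⟨i, hi, h⟩ := h
      simp at h
    · simp at h
  · rintro ⟨h1, h2⟩
    refine ⟨Or.inl (Or.inl (Or.inl ?_)), ?_⟩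
    · rw [key, inj.mem_set_image]
      exact ⟨h1, h2⟩
    · simpa using h1.ne

theorem adj_lr (x : V) (i : Fin (ℓ - 1)) : (pathGr G₁ u v ℓ hℓ).Adj (Sum.inl x) (Sum.inr i) ↔
    (x = u ∧ i.1 = 0) ∨ (x = v ∧ i.1 = ℓ - 2) := by
  unfold pathGr
  rw [SimpleGraph.fromEdgeSet_adj]
  constructor
  · rintro ⟨((h | h) | h) | h, hne⟩
    · obtain ⟨e, he, h⟩ := h
      induction e using Sym2.ind with
      | _ p q => simp at h
    · simp [Fin.ext_iff] at h
      exact Or.inl h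
    · obtain ⟨i, hi, h⟩ := h
      simp at h
    · simp [Fin.ext_iff] at h
      exact Or.inr h
  · rintro (⟨rfl, h⟩ | ⟨rfl, h⟩)
    · refine ⟨Or.inl (Or.inl (Or.inr ?_)), by simp⟩
      simp [Fin.ext_iff, h]
    · refine ⟨Or.inr ?_, by simp⟩
      simp [Fin.ext_iff, h]

theorem adj_rr (i j : Fin (ℓ - 1)) : (pathGr G₁ u v ℓ hℓ).Adj (Sum.inr i) (Sum.inr j) ↔
    (j.1 = i.1 + 1) ∨ (i.1 = j.1 + 1) := by
  unfold pathGr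
  rw [SimpleGraph.fromEdgeSet_adj]
  constructor
  · rintro ⟨((h | h) | h) | h, hne⟩
    · obtain ⟨e, he, h⟩ := h
      induction e using Sym2.ind with
      | _ p q => simp at h
    · simp at h
    · obtain ⟨k, hk, h⟩ := h
      simp [Fin.ext_iff] at h
      omega
    · simp at h
  · intro h
    refine ⟨Or.inl (Or.inr ?_), by simp [Fin.ext_iff]; omega⟩
    rcases h with h | h
    · refine ⟨i.1, by omega, ?_⟩
      simp [Fin.ext_iff, h]
    · refine ⟨j.1, by omega, ?_⟩
      simp [Fin.ext_iff, h]

end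

theorem redDeg_inl {V : Type*} [Fintype V] [DecidableEq V] (G₁ : SimpleGraph V) (u v : V)
    (hadj : G₁.Adj u v) (ℓ : ℕ) (hℓ : 5 ≤ ℓ) (f : Sym2 V → ℕ) (g : Sym2 (V ⊕ Fin (ℓ - 1)) → ℕ)
    (h1 : ∀ x y, g s(Sum.inl x, Sum.inl y) = f s(x, y))
    (h2 : ∀ x i, g s(Sum.inl x, Sum.inr i) = f s(u, v)) (x : V) :
    redDeg (pathGr G₁ u v ℓ hℓ) g (Sum.inl x) = redDeg G₁ f x := by
  have huv := hadj.ne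
  rw [redDeg_eq_sum, redDeg_eq_sum, Fintype.sum_sum_type]
  simp only [adj_ll, adj_lr, h1, h2]
  generalize hC : f s(u, v) = C
  have e1 : ∀ y, (if G₁.Adj x y then f s(x, y) else 0) =
      (if G₁.Adj x y ∧ s(x, y) ≠ s(u, v) then f s(x, y) else 0) +
      ((if y = v then (if x = u then C else 0) else 0) +
        (if y = u then (if x = v then C else 0) else 0)) := by
    intro y
    by_cases hs : s(x, y) = s(u, v)
    · have : G₁.Adj x y := by
        rw [← SimpleGraph.mem_edgeSet, hs]
        exact hadj
      rw [if_pos this, if_neg (by simp [hs]), hs, hC]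
      rcases Sym2.eq_iff.1 hs with ⟨rfl, rfl⟩ | ⟨rfl, rfl⟩
      · simp [huv]
      · simp [huv]
    · have h3 : ¬ (y = v ∧ x = u) := by
        rintro ⟨rfl, rfl⟩
        exact hs rfl
      have h4 : ¬ (y = u ∧ x = v) := by
        rintro ⟨rfl, rfl⟩
        exact hs Sym2.eq_swap
      rw [← ite_and, ← ite_and, if_neg h3, if_neg h4]
      simp [hs]
  have e2 : ∀ i : Fin (ℓ - 1), (if (x = u ∧ i.1 = 0) ∨ (x = v ∧ i.1 = ℓ - 2) then C else 0) =
      (if i = ⟨0, by omega⟩ then (if x = u then C else 0) else 0) +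
        (if i = ⟨ℓ - 2, by omega⟩ then (if x = v then C else 0) else 0) := by
    intro i
    simp only [Fin.ext_iff]
    by_cases hx : x = u
    · have hy : ¬ x = v := fun h => huv (hx.symm.trans h)
      simp only [hx, true_and, if_true, huv, false_and, or_false, if_false, ite_self, add_zero]
    · simp only [hx, false_and, false_or, if_false, ite_self, zero_add]
      rw [← ite_and]
      exact if_congr and_comm rfl rfl
  rw [Finset.sum_congr rfl (fun y _ => e1 y), Finset.sum_congr rfl (fun i _ => e2 i)]
  simp only [Finset.sum_add_distrib, Finset.sum_ite_eq', Finset.mem_univ, if_true]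

theorem redDeg_inr {V : Type*} [Fintype V] [DecidableEq V] (G₁ : SimpleGraph V) (u v : V)
    (huv : u ≠ v) (ℓ : ℕ) (hℓ : 5 ≤ ℓ) (a : ℕ → ℕ) (g : Sym2 (V ⊕ Fin (ℓ - 1)) → ℕ)
    (h0 : ∀ x i, g s(Sum.inr i, Sum.inl x) = a 0) (hl : a (ℓ - 1) = a 0)
    (h2 : ∀ i j, g s(Sum.inr i, Sum.inr j) = a (max i.1 j.1)) (i : Fin (ℓ - 1)) :
    redDeg (pathGr G₁ u v ℓ hℓ) g (Sum.inr i) = a i.1 + a (i.1 + 1) := by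
  rw [redDeg_eq_sum, Fintype.sum_sum_type]
  simp only [adj_rr, h0, h2, SimpleGraph.adj_comm _ (Sum.inr i) (Sum.inl _), adj_lr]
  have e1 : ∀ x : V, (if (x = u ∧ i.1 = 0) ∨ (x = v ∧ i.1 = ℓ - 2) then a 0 else 0) =
      (if x = u then (if i.1 = 0 then a 0 else 0) else 0) +
        (if x = v then (if i.1 = ℓ - 2 then a 0 else 0) else 0) := by
    intro x
    by_cases hi : i.1 = 0
    · have : ¬ (i.1 = ℓ - 2) := by omega
      simp only [hi, this, and_true, and_false, or_false, if_true, if_false, ite_self, add_zero]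
      simp only [show ¬ (0 = ℓ - 2) by omega, and_false, or_false, if_false, ite_self, add_zero]
    · simp [hi, ite_and]
  have e2 : ∀ j : Fin (ℓ - 1), (if j.1 = i.1 + 1 ∨ i.1 = j.1 + 1 then a (max i.1 j.1) else 0) =
      (if j.1 = i.1 + 1 then a (i.1 + 1) else 0) + (if j.1 + 1 = i.1 then a i.1 else 0) := by
    intro j
    by_cases hj : j.1 = i.1 + 1
    · have h3 : ¬ (j.1 + 1 = i.1) := by omega
      rw [if_pos (Or.inl hj), if_pos hj, if_neg h3, max_eq_right (by omega), hj, add_zero]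
    · by_cases hk : j.1 + 1 = i.1
      · rw [if_pos (Or.inr hk.symm), if_neg hj, if_pos hk, max_eq_left (by omega), zero_add]
      · rw [if_neg (by omega), if_neg hj, if_neg hk]
  have s1 : (∑ j : Fin (ℓ - 1), if j.1 = i.1 + 1 then a (i.1 + 1) else 0) =
      if i.1 = ℓ - 2 then 0 else a (i.1 + 1) := by
    by_cases h : i.1 = ℓ - 2
    · rw [if_pos h]
      exact Finset.sum_eq_zero (fun j _ => if_neg (by omega))
    · rw [if_neg h, Finset.sum_eq_single (⟨i.1 + 1, by omega⟩ : Fin (ℓ - 1))]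
      · simp
      · intro b _ hb
        rw [if_neg]
        simpa [Fin.ext_iff] using hb
      · simp
  have s2 : (∑ j : Fin (ℓ - 1), if j.1 + 1 = i.1 then a i.1 else 0) =
      if i.1 = 0 then 0 else a i.1 := by
    by_cases h : i.1 = 0
    · rw [if_pos h]
      exact Finset.sum_eq_zero (fun j _ => if_neg (by omega))
    · rw [if_neg h, Finset.sum_eq_single (⟨i.1 - 1, by omega⟩ : Fin (ℓ - 1))]
      · rw [if_pos]
        simp
        omega
      · intro b _ hb
        rw [if_neg]
        simp [Fin.ext_iff] at hb
        omega
      · simp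
  rw [Finset.sum_congr rfl (fun y _ => e1 y), Finset.sum_congr rfl (fun i _ => e2 i)]
  simp only [Finset.sum_add_distrib, Finset.sum_ite_eq', Finset.mem_univ, if_true, s1, s2]
  by_cases h : i.1 = 0
  · have : ¬ (i.1 = ℓ - 2) := by omega
    rw [if_pos h, if_neg this, if_neg this, if_pos h, h]
    omega
  · by_cases h' : i.1 = ℓ - 2
    · have h3 : i.1 + 1 = ℓ - 1 := by omega
      rw [if_neg h, if_pos h', if_pos h', if_neg h, h3, hl]
      omega
    · rw [if_neg h, if_neg h', if_neg h', if_neg h]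
      omega

/-- the new multiplicities -/
def newR {V : Type*} (r : Sym2 V → ℕ) (a : ℕ → ℕ) (n : ℕ) : Sym2 (V ⊕ Fin n) → ℕ :=
  Sym2.lift ⟨fun p q => match p, q with
    | Sum.inl x, Sum.inl y => r s(x, y)
    | Sum.inl _, Sum.inr _ => a 0
    | Sum.inr _, Sum.inl _ => a 0
    | Sum.inr i, Sum.inr j => a (max i.1 j.1), by
      rintro (x | i) (y | j)
      · simp [Sym2.eq_swap]
      · rfl
      · rfl
      · simp [max_comm]⟩

theorem lir_main {V : Type*} [Fintype V] [DecidableEq V]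
    (G₁ : SimpleGraph V) (u v : V) (hadj : G₁.Adj u v)
    (hu : G₁.degree u = 3) (hv : G₁.degree v = 3)
    (r : Sym2 V → ℕ) (hr : IsLIR2 G₁ r)
    (ℓ : ℕ) (hℓ : 5 ≤ ℓ) : LIRtwoLE2 (pathGr G₁ u v ℓ hℓ) := by
  obtain ⟨hr2, hr⟩ := hr
  have hU := red_add_blue G₁ r hr2 u
  have hW := red_add_blue G₁ r hr2 v
  rw [hu] at hU
  rw [hv] at hW
  have hc : r s(u, v) ≤ 2 := hr2 _ hadj
  have hne : redDeg G₁ r u ≠ redDeg G₁ r v := by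
    have := hr u v hadj
    omega
  obtain ⟨p, q, hp, hq, hpq, k1, k2, k3, k4⟩ := exists_ends _ _ _ hc hne
  obtain ⟨a, a0, a1, a2, a3, a4, a5⟩ := exists_seq (ℓ - 5) _ p q _ hc hp hq hc hpq
  have i3 : ℓ - 5 + 3 = ℓ - 2 := by omega
  have i4 : ℓ - 5 + 4 = ℓ - 1 := by omega
  rw [i3] at a2 a5
  rw [i4] at a3
  have Rl : ∀ x, redDeg (pathGr G₁ u v ℓ hℓ) (newR r a (ℓ - 1)) (Sum.inl x) = redDeg G₁ r x :=
    redDeg_inl G₁ u v hadj ℓ hℓ r _ (fun x y => rfl) (fun x i => a0)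
  have Bl : ∀ x, blueDeg (pathGr G₁ u v ℓ hℓ) (newR r a (ℓ - 1)) (Sum.inl x) = blueDeg G₁ r x :=
    redDeg_inl G₁ u v hadj ℓ hℓ (fun e => 2 - r e) (fun e => 2 - newR r a (ℓ - 1) e)
      (fun x y => rfl) (fun x i => congrArg (fun t => 2 - t) a0)
  have Rr : ∀ i : Fin (ℓ - 1), redDeg (pathGr G₁ u v ℓ hℓ) (newR r a (ℓ - 1)) (Sum.inr i) =
      a i.1 + a (i.1 + 1) :=
    redDeg_inr G₁ u v hadj.ne ℓ hℓ a _ (fun x i => rfl) (a3.trans a0.symm) (fun i j => rfl)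
  have Br : ∀ i : Fin (ℓ - 1), blueDeg (pathGr G₁ u v ℓ hℓ) (newR r a (ℓ - 1)) (Sum.inr i) =
      (2 - a i.1) + (2 - a (i.1 + 1)) :=
    redDeg_inr G₁ u v hadj.ne ℓ hℓ (fun i => 2 - a i) (fun e => 2 - newR r a (ℓ - 1) e)
      (fun x i => rfl) (by simp only [a3, a0]) (fun i j => rfl)
  have LR : ∀ x (i : Fin (ℓ - 1)), ((x = u ∧ i.1 = 0) ∨ (x = v ∧ i.1 = ℓ - 2)) →
      (1 ≤ a 0 → redDeg G₁ r x ≠ a i.1 + a (i.1 + 1)) ∧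
      (a 0 ≤ 1 → blueDeg G₁ r x ≠ (2 - a i.1) + (2 - a (i.1 + 1))) := by
    rintro x i (⟨rfl, h⟩ | ⟨rfl, h⟩)
    · rw [h, zero_add, a0, a1]
      omega
    · have h3 : i.1 + 1 = ℓ - 1 := by omega
      rw [h3, h, a0, a2, a3]
      omega
  have RR : ∀ i : ℕ, i < ℓ - 2 → a i + a (i + 1) ≠ a (i + 1) + a (i + 1 + 1) ∧
      (2 - a i) + (2 - a (i + 1)) ≠ (2 - a (i + 1)) + (2 - a (i + 1 + 1)) := by
    intro i hi
    have := a5 i hi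
    have e : i + 1 + 1 = i + 2 := rfl
    rw [e]
    have := a4 i
    have := a4 (i + 2)
    omega
  refine ⟨newR r a (ℓ - 1), ?_, ?_⟩
  · intro e he
    induction e using Sym2.ind with
    | _ x y =>
      rw [SimpleGraph.mem_edgeSet] at he
      rcases x with x | i <;> rcases y with y | j
      · exact hr2 s(x, y) ((adj_ll ..).1 he).1
      · exact a4 _
      · exact a4 _
      · exact a4 _
  · rintro (x | i) (y | j) h
    · rw [Rl, Rl, Bl, Bl]
      exact hr x y ((adj_ll ..).1 h).1
    · rw [Rl, Rr, Bl, Br]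
      exact LR x j ((adj_lr ..).1 h)
    · rw [Rl, Rr, Bl, Br]
      have := LR y i ((adj_lr ..).1 h.symm)
      exact ⟨fun h => (this.1 h).symm, fun h => (this.2 h).symm⟩
    · rw [Rr, Rr, Br, Br]
      rcases (adj_rr ..).1 h with h | h
      · have := RR i.1 (by omega)
        rw [h]
        exact ⟨fun _ => this.1, fun _ => this.2⟩
      · have := RR j.1 (by omega)
        rw [h]
        exact ⟨fun _ => this.1.symm, fun _ => this.2.symm⟩

/-- Let `G₁` be a simple graph with maximum degree at most 3, let `u` and `v`
be adjacent vertices of `G₁` of degree 3, and suppose `lir(²G₁) ≤ 2`.  Let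
`ℓ ≥ 5` and let `G₂` (on the vertex type `V ⊕ Fin (ℓ - 1)`) be obtained from
`G₁` by deleting the edge `uv` and replacing it by the path
`u, x₀, x₁, …, x_{ℓ-2}, v` of length `ℓ`.  Then `lir(²G₂) ≤ 2`. -/
theorem lir_two_mul_replace_edge_by_path {V : Type*} [Fintype V] [DecidableEq V]
    (G₁ : SimpleGraph V) (u v : V) (hadj : G₁.Adj u v)
    (hsub : ∀ x : V, G₁.degree x ≤ 3)
    (hu : G₁.degree u = 3) (hv : G₁.degree v = 3)
    (hlir : LIRtwoLE2 G₁)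
    (ℓ : ℕ) (hℓ : 5 ≤ ℓ) :
    LIRtwoLE2 (SimpleGraph.fromEdgeSet
      ((Sym2.map (Sum.inl : V → V ⊕ Fin (ℓ - 1)) '' (G₁.edgeSet \ {s(u, v)}))
        ∪ {s(Sum.inl u, (Sum.inr ⟨0, by omega⟩ : V ⊕ Fin (ℓ - 1)))}
        ∪ {e : Sym2 (V ⊕ Fin (ℓ - 1)) | ∃ i : ℕ, ∃ h : i + 1 < ℓ - 1,
            e = s(Sum.inr ⟨i, by omega⟩, Sum.inr ⟨i + 1, h⟩)}
        ∪ {s((Sum.inr ⟨ℓ - 2, by omega⟩ : V ⊕ Fin (ℓ - 1)), Sum.inl v)})) := by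
  obtain ⟨r, hr⟩ := hlir
  exact lir_main G₁ u v hadj hu hv r hr ℓ hℓ
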